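/- Let E be a subset of ℂ^m. If E is non-thin at ∞ and A ⊆ ℂ^m is pluripolar, then E \ A is non-thin at ∞. -/

import Mathlib

/-!
Let `A ⊆ {u = -∞}` with `u ≢ -∞` plurisubharmonic, and let `v` be a competitor for the Green
function of `(E \ A)_R`.

Off `{u = -∞}` nothing is lost: `v ≤ V_{E_R}` there (`le_greenFn`). The function
`(1 - ε) * v + a * (u - M₀)`, with `u ≤ M₀` on a large ball and `a > 0` small, is nonpositive on all
of `E_R`. On the boundary of the ball it is at most `(1 - ε) * log ‖x‖ + O(1)`, hence lies below
`log⁺ ‖x‖ - b` there if the ball is large, so gluing the two (`pshOn_glue`) gives a competitor for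
`V_{E_R}` whose value at a point with `u ≠ -∞` tends to that of `v` as `ε → 0`
(`exists_competitor`).

For `z₀` with `u z₀ = -∞`, join `z₀` to a point where `u` is finite by a complex line and restrict to
it. On a circle of radius `4` in this line `u` is finite almost everywhere (`measure_circ_eq_bot`),
and `V_{E_R} → 0` pointwise, so for large `R` every competitor `v` is below `δ` on all of the circle
but a set of measure at most `η`. Since `v` has logarithmic growth, this bounds `v` on the whole
circle independently of `v`, and the mean value inequality gives `v z₀ ≤ δ + 6 * η * log 4`
(`le_of_small_on_circle`).

The analysis in one variable rests on the polynomial criterion that defines subharmonicity. Real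
parts of polynomials are dense in `C(circle, ℝ)` (`exists_re_polynomial_approx`), which turns the
criterion into the two-constants inequality (`two_constants`) and the additivity of subharmonicity
(`SubharmonicOn'.add`); a maximum principle (`max_principle`) makes subharmonicity a local property.
-/

open Filter Metric

noncomputable section

/-- An upper semicontinuous `EReal`-valued function `u` (never `+∞`) on `U ⊆ ℂ` is
*subharmonic* on `U` if it satisfies the harmonic-polynomial maximum criterion:
whenever `u ≤ Re p` on a circle contained (with its disc) in `U`, for a complex
polynomial `p`, then `u ≤ Re p` throughout the corresponding closed disc. -/
def SubharmonicOn' (u : ℂ → EReal) (U : Set ℂ) : Prop :=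
  UpperSemicontinuousOn u U ∧ (∀ z ∈ U, u z < ⊤) ∧
  ∀ (c : ℂ) (r : ℝ), 0 < r → closedBall c r ⊆ U →
    ∀ p : Polynomial ℂ,
      (∀ z ∈ sphere c r, u z ≤ ((p.eval z).re : EReal)) →
      ∀ z ∈ closedBall c r, u z ≤ ((p.eval z).re : EReal)

/-- A function `u : ℂ^m → [-∞,∞)` is *plurisubharmonic* on `U` if it is upper
semicontinuous on `U`, nowhere `+∞` on `U`, and its restriction to every complex
line is subharmonic. -/
def PshOn {m : ℕ} (u : EuclideanSpace ℂ (Fin m) → EReal)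
    (U : Set (EuclideanSpace ℂ (Fin m))) : Prop :=
  UpperSemicontinuousOn u U ∧ (∀ z ∈ U, u z < ⊤) ∧
  ∀ (a b : EuclideanSpace ℂ (Fin m)), b ≠ 0 →
    SubharmonicOn' (fun w => u (a + w • b)) {w : ℂ | a + w • b ∈ U}

/-- The class `𝕃` of plurisubharmonic functions on `ℂ^m` of minimal growth:
`u(z) - log |z| ≤ O(1)` as `|z| → ∞`. -/
def MinGrowth {m : ℕ} (u : EuclideanSpace ℂ (Fin m) → EReal) : Prop :=
  PshOn u Set.univ ∧ ∃ C R₀ : ℝ, ∀ z, R₀ ≤ ‖z‖ → u z ≤ ((Real.log ‖z‖ + C : ℝ) : EReal)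

/-- The pluricomplex Green function (Siciak extremal function) of `E ⊆ ℂ^m`:
`V_E(z) = sup { u(z) : u ∈ 𝕃, u ≤ 0 on E }`. -/
def greenFn {m : ℕ} (E : Set (EuclideanSpace ℂ (Fin m)))
    (z : EuclideanSpace ℂ (Fin m)) : EReal :=
  sSup ((fun u => u z) '' {u | MinGrowth u ∧ ∀ x ∈ E, u x ≤ 0})

/-- The upper semicontinuous regularization `V_E*` of the Green function. -/
def greenFnStar {m : ℕ} (E : Set (EuclideanSpace ℂ (Fin m)))
    (z : EuclideanSpace ℂ (Fin m)) : EReal :=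
  Filter.limsup (greenFn E) (nhds z)

/-- `E ⊆ ℂ^m` is non-thin at `∞` if `lim_{R→∞} V_{E_R}(z) = 0` for all `z ∈ ℂ^m`,
where `E_R = E ∩ {|z| ≤ R}`. -/
def NonthinAtInfty {m : ℕ} (E : Set (EuclideanSpace ℂ (Fin m))) : Prop :=
  ∀ z, Tendsto (fun R : ℝ => greenFn (E ∩ closedBall 0 R) z) atTop (nhds (0 : EReal))

/-- `A ⊆ ℂ^m` is pluripolar if `A ⊆ {u = -∞}` for some plurisubharmonic `u ≢ -∞` on `ℂ^m`. -/
def Pluripolar {m : ℕ} (A : Set (EuclideanSpace ℂ (Fin m))) : Prop :=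
  ∃ u : EuclideanSpace ℂ (Fin m) → EReal, PshOn u Set.univ ∧ (∃ z, u z ≠ ⊥) ∧ ∀ a ∈ A, u a = ⊥

/-- The Robin constant `γ(K) = limsup_{z→∞} [V_K*(z) - log |z|]`.  The
`ℂ^m`-capacity is `C(K) = e^{-γ(K)}`, so that `log C(K) = -γ(K)`. -/
def robinConst {m : ℕ} (K : Set (EuclideanSpace ℂ (Fin m))) : EReal :=
  Filter.limsup (fun z => greenFnStar K z - ((Real.log ‖z‖ : ℝ) : EReal))
    (Bornology.cobounded (EuclideanSpace ℂ (Fin m)))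

/-! ### Polynomials on circles -/

/-- The circle of centre `c` and radius `r`, parametrized by `ℝ / ℤ`. -/
def circ (c : ℂ) (r : ℝ) (θ : UnitAddCircle) : ℂ := c + r * fourier 1 θ

lemma continuous_circ (c : ℂ) (r : ℝ) : Continuous (circ c r) := by
  unfold circ; fun_prop

lemma norm_fourier_apply (n : ℤ) (θ : UnitAddCircle) : ‖fourier n θ‖ = 1 := by
  rw [fourier_apply, Circle.norm_coe]

lemma norm_circ_sub (c : ℂ) {r : ℝ} (hr : 0 < r) (θ : UnitAddCircle) :
    ‖circ c r θ - c‖ = r := by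
  simp [circ, abs_of_pos hr, -fourier_apply, norm_fourier_apply]

lemma circ_mem_sphere (c : ℂ) {r : ℝ} (hr : 0 < r) (θ : UnitAddCircle) :
    circ c r θ ∈ sphere c r := by
  rw [mem_sphere_iff_norm, norm_circ_sub c hr]

lemma exists_circ_eq {c : ℂ} {r : ℝ} (hr : 0 < r) {z : ℂ} (hz : z ∈ sphere c r) :
    ∃ θ, circ c r θ = z := by
  have hn : ‖(z - c) / r‖ = 1 := by
    rw [norm_div, mem_sphere_iff_norm.1 hz, Complex.norm_real, Real.norm_of_nonneg hr.le,
      div_self hr.ne']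
  obtain ⟨θ, hθ⟩ := (AddCircle.homeomorphCircle (T := 1) one_ne_zero).surjective
    ⟨(z - c) / r, by simpa [Submonoid.unitSphere] using hn⟩
  refine ⟨θ, ?_⟩
  have h2 : ((AddCircle.toCircle θ : Circle) : ℂ) = (z - c) / r := by
    rw [← AddCircle.homeomorphCircle_apply one_ne_zero, hθ]
  have hr' : (r : ℂ) ≠ 0 := by exact_mod_cast hr.ne'
  rw [circ, fourier_one, h2]
  field_simp
  ring

lemma fourier_natCast (n : ℕ) (θ : UnitAddCircle) :
    fourier (n : ℤ) θ = (fourier 1 θ) ^ n := by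
  induction n with
  | zero => simp
  | succ n ih => rw [Nat.cast_succ, fourier_add, ih, pow_succ]

open Polynomial in
/-- The real parts of polynomials are dense in the real continuous functions on a circle: a
trigonometric polynomial is, on the circle, `p + conj q` with `p`, `q` polynomials, and its real
part is that of `p + q`. -/
lemma exists_re_polynomial_approx (c : ℂ) {r : ℝ} (hr : 0 < r) (f : C(UnitAddCircle, ℝ))
    {ε : ℝ} (hε : 0 < ε) :
    ∃ q : ℂ[X], ∀ θ, |(q.eval (circ c r θ)).re - f θ| ≤ ε := by
  have hr' : (r : ℂ) ≠ 0 := by exact_mod_cast hr.ne'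
  have key : ∀ F ∈ Submodule.span ℂ (Set.range (@fourier 1)), ∃ p q : ℂ[X], ∀ θ : UnitAddCircle,
      F θ = p.eval (circ c r θ) + (starRingEnd ℂ) (q.eval (circ c r θ)) := by
    intro F hF
    induction hF using Submodule.span_induction with
    | mem F hF =>
      obtain ⟨n, rfl⟩ := hF
      have hm : ∀ (k : ℕ) (θ : UnitAddCircle),
          ((C (r : ℂ)⁻¹ * (X - C c)) ^ k).eval (circ c r θ) = fourier (k : ℤ) θ := by
        intro k θ
        rw [fourier_natCast]
        simp only [circ, eval_pow, eval_mul, eval_sub, eval_X, eval_C]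
        congr 1
        field_simp
        ring
      obtain ⟨k, rfl | rfl⟩ := n.eq_nat_or_neg
      · exact ⟨_, 0, fun θ => by rw [hm k θ]; simp⟩
      · exact ⟨0, _, fun θ => by rw [hm k θ, fourier_neg]; simp⟩
    | zero => exact ⟨0, 0, fun θ => by simp⟩
    | add F G _ _ hF hG =>
      obtain ⟨p, q, h⟩ := hF
      obtain ⟨p', q', h'⟩ := hG
      refine ⟨p + p', q + q', fun θ => ?_⟩
      simp only [ContinuousMap.add_apply, h, h', eval_add, map_add]
      ring
    | smul a F _ hF =>
      obtain ⟨p, q, h⟩ := hF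
      refine ⟨C a * p, C ((starRingEnd ℂ) a) * q, fun θ => ?_⟩
      simp only [ContinuousMap.smul_apply, h, eval_mul, eval_C, map_mul, Complex.conj_conj,
        smul_eq_mul]
      ring
  let g : C(UnitAddCircle, ℂ) := ⟨fun θ => (f θ : ℂ), by fun_prop⟩
  have hg : g ∈ (Submodule.span ℂ (Set.range (@fourier 1))).topologicalClosure := by
    rw [span_fourier_closure_eq_top]; trivial
  obtain ⟨F, hF, hd⟩ := Metric.mem_closure_iff.1 hg ε hε
  obtain ⟨p, q, h⟩ := key F hF
  refine ⟨p + q, fun θ => ?_⟩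
  have h1 : ‖g θ - F θ‖ ≤ ε := by
    rw [← dist_eq_norm]
    exact (ContinuousMap.dist_apply_le_dist θ).trans hd.le
  have h2 : ((p + q).eval (circ c r θ)).re - f θ = -(g θ - F θ).re := by
    rw [h]; simp [g]
  rw [h2, abs_neg]
  exact (Complex.abs_re_le_norm _).trans h1

open Polynomial MeasureTheory in
/-- The mean value property of polynomials. -/
lemma integral_eval_circ (c : ℂ) (r : ℝ) (q : ℂ[X]) :
    ∫ θ, q.eval (circ c r θ) ∂AddCircle.haarAddCircle = q.eval c := by
  have h0 : ∀ n : ℕ, ∫ θ : UnitAddCircle, fourier (n : ℤ) θ ∂AddCircle.haarAddCircle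
      = if n = 0 then 1 else 0 := by
    intro n
    split_ifs with hn
    · subst hn; simp
    · exact integral_eq_zero_of_add_right_eq_neg (μ := AddCircle.haarAddCircle)
        (fourier_add_half_inv_index (by exact_mod_cast hn) one_pos)
  have h1 : ∀ θ, q.eval (circ c r θ) = ∑ n ∈ Finset.range ((q.comp (X + C c)).natDegree + 1),
      ((q.comp (X + C c)).coeff n * (r : ℂ) ^ n) * fourier (n : ℤ) θ := by
    intro θ
    have : q.eval (circ c r θ) = (q.comp (X + C c)).eval (r * fourier 1 θ) := by
      simp [circ, eval_comp, add_comm]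
    rw [this, eval_eq_sum_range]
    refine Finset.sum_congr rfl fun n _ => ?_
    rw [mul_pow, fourier_natCast]; ring
  simp_rw [h1]
  rw [integral_finsetSum]
  · simp_rw [integral_const_mul, h0]
    simp [coeff_zero_eq_eval_zero, eval_comp]
  · intro n _
    apply Continuous.integrable_of_hasCompactSupport
    · fun_prop
    · exact HasCompactSupport.of_compactSpace _

open Polynomial MeasureTheory in
lemma integral_re_eval_circ (c : ℂ) (r : ℝ) (q : ℂ[X]) :
    ∫ θ, (q.eval (circ c r θ)).re ∂AddCircle.haarAddCircle = (q.eval c).re := by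
  rw [← integral_eval_circ c r q]
  refine integral_re (𝕜 := ℂ) ?_
  apply Continuous.integrable_of_hasCompactSupport
  · exact q.continuous.comp (continuous_circ c r)
  · exact HasCompactSupport.of_compactSpace _

open Polynomial in
/-- Maximum principle: `‖exp (-p) • f‖ ≤ 1` on a disc as soon as it holds on its boundary. -/
lemma norm_le_exp_re {F : Type*} [NormedAddCommGroup F] [NormedSpace ℂ F] {f : ℂ → F}
    (hf : Differentiable ℂ f) {c : ℂ} {r : ℝ} (p : ℂ[X])
    (h : ∀ z ∈ sphere c r, ‖f z‖ ≤ Real.exp (p.eval z).re) (hr : 0 < r) :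
    ∀ z ∈ closedBall c r, ‖f z‖ ≤ Real.exp (p.eval z).re := by
  have hn : ∀ z, ‖Complex.exp (-p.eval z) • f z‖ ≤ 1 ↔ ‖f z‖ ≤ Real.exp (p.eval z).re := by
    intro z
    rw [norm_smul, Complex.norm_exp, Complex.neg_re, Real.exp_neg, inv_mul_le_iff₀ (Real.exp_pos _),
      mul_one]
  intro z hz
  rw [← hn]
  refine Complex.norm_le_of_forall_mem_frontier_norm_le (U := ball c r)
    (f := fun z => Complex.exp (-p.eval z) • f z) isBounded_ball
    (Differentiable.diffContOnCl ?_) (fun w hw => ?_) (by rwa [closure_ball _ hr.ne'])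
  · exact (Complex.differentiable_exp.comp p.differentiable.neg).smul hf
  · rw [frontier_ball _ hr.ne'] at hw
    exact (hn w).2 (h w hw)

open Polynomial in
lemma re_nonneg_of_sphere {c : ℂ} {r : ℝ} (hr : 0 < r) (p : ℂ[X])
    (h : ∀ z ∈ sphere c r, 0 ≤ (p.eval z).re) : ∀ z ∈ closedBall c r, 0 ≤ (p.eval z).re := by
  have := norm_le_exp_re (f := fun _ : ℂ => (1 : ℂ)) (by fun_prop) (c := c) (r := r) p
    (by simpa using h) hr
  simpa using this

open Polynomial in
/-- A Harnack inequality for real parts of polynomials, from the Borel–Carathéodory theorem. -/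
lemma harnack {c : ℂ} {r : ℝ} (hr : 0 < r) (p : ℂ[X])
    (h : ∀ z ∈ sphere c r, 0 ≤ (p.eval z).re) {w : ℂ} (hw : ‖w - c‖ ≤ r / 4) :
    1 / 3 * (p.eval c).re ≤ (p.eval w).re := by
  have hp := re_nonneg_of_sphere hr p h
  have hc := hp c (mem_closedBall_self hr.le)
  have hη : ∀ η > 0, 1 / 3 * (p.eval c).re - η ≤ (p.eval w).re := by
    intro η hη
    have := Complex.borelCaratheodory_zero (f := fun z => p.eval c - p.eval (c + z)) (R := r)
      (M := (p.eval c).re + η) (z := w - c) (by positivity) (by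
        apply Differentiable.differentiableOn
        have : Differentiable ℂ fun z : ℂ => p.eval z := p.differentiable
        fun_prop) (fun z hz => by
        have := hp (c + z) (by simpa using (mem_ball_zero_iff.1 hz).le)
        simp only [Set.mem_ofPred_eq, Complex.sub_re]; linarith) hr
      (by rw [mem_ball_zero_iff]; linarith) (by simp)
    have h2 := (Complex.re_le_norm _).trans this
    simp only [add_sub_cancel, Complex.sub_re] at h2
    have h3 : 2 * ((p.eval c).re + η) * ‖w - c‖ / (r - ‖w - c‖) ≤ 2 / 3 * ((p.eval c).re + η) := by
      rw [div_le_iff₀ (by linarith)]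
      have : 0 ≤ (p.eval c).re + η := by positivity
      nlinarith
    linarith
  exact le_of_forall_pos_le_add fun η h' => by linarith [hη η h']

/-! ### Maximum principles -/

lemma EReal.eq_bot_or_coe {x : EReal} (hx : x < ⊤) : x = ⊥ ∨ ∃ t : ℝ, x = t := by
  induction x with
  | bot => exact Or.inl rfl
  | coe t => exact Or.inr ⟨t, rfl⟩
  | top => exact absurd hx (lt_irrefl _)

lemma EReal.continuousAt_add_of_lt_top {x y : EReal} (hx : x < ⊤) (hy : y < ⊤) :
    ContinuousAt (fun p : EReal × EReal => p.1 + p.2) (x, y) :=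
  EReal.continuousAt_add (Or.inl hx.ne) (Or.inr hy.ne)

open Polynomial in
/-- Maximum principle for a function `s` that satisfies the polynomial criterion only at the
centres of small discs, against a function `h` that is, near each point of `G`, the real part of a
polynomial up to an error `o(r ^ 2)`. A maximum point `w` of `s - h + δ * ‖·‖ ^ 2` cannot lie in
`G`, since on a small circle around `w` the function `‖·‖ ^ 2 - r ^ 2` is the real part of a
polynomial. -/
lemma max_principle {K G : Set ℂ} (hK : IsCompact K) {s : ℂ → EReal}
    (hs : UpperSemicontinuousOn s K) (htop : ∀ z ∈ K, s z < ⊤) {h : ℂ → ℝ} (hh : ContinuousOn h K)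
    (hloc : ∀ w ∈ G, ∀ δ > 0, ∃ r > 0, closedBall w r ⊆ K ∧
      (∀ q : ℂ[X], (∀ z ∈ sphere w r, s z ≤ ((q.eval z).re : EReal)) →
        s w ≤ ((q.eval w).re : EReal)) ∧
      ∃ p : ℂ[X], ∀ z ∈ closedBall w r, |h z - (p.eval z).re| ≤ δ * r ^ 2)
    (hb : ∀ z ∈ K, z ∉ G → s z ≤ (h z : EReal)) : ∀ z ∈ K, s z ≤ (h z : EReal) := by
  intro z₁ hz₁
  by_contra! hlt
  obtain ht | ⟨t₁, ht₁⟩ := EReal.eq_bot_or_coe (htop z₁ hz₁)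
  · simp [ht] at hlt
  rw [ht₁, EReal.coe_lt_coe_iff] at hlt
  obtain ⟨B, hB⟩ := hK.isBounded.exists_norm_le
  have hB0 : 0 ≤ B := (norm_nonneg _).trans (hB z₁ hz₁)
  set δ : ℝ := (t₁ - h z₁) / (2 * (B ^ 2 + 1)) with hδ
  have hδ0 : 0 < δ := div_pos (by linarith) (by positivity)
  have hδB : δ * B ^ 2 < t₁ - h z₁ := by
    have : δ * (2 * (B ^ 2 + 1)) = t₁ - h z₁ := by rw [hδ]; field_simp
    nlinarith
  have husc : UpperSemicontinuousOn
      (fun z => s z + ((-h z + δ * ‖z‖ ^ 2 : ℝ) : EReal)) K := by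
    refine UpperSemicontinuousOn.add' hs (ContinuousOn.upperSemicontinuousOn ?_)
      fun x hx => EReal.continuousAt_add_of_lt_top (htop x hx) (EReal.coe_lt_top _)
    exact continuous_coe_real_ereal.comp_continuousOn (by fun_prop)
  obtain ⟨w, hwK, hw⟩ := husc.exists_isMaxOn ⟨z₁, hz₁⟩ hK
  have hw₁ := hw hz₁
  simp only [Set.mem_ofPred_eq, ht₁] at hw₁
  obtain ht | ⟨t, ht⟩ := EReal.eq_bot_or_coe (htop w hwK)
  · rw [ht, EReal.bot_add, ← EReal.coe_add, le_bot_iff] at hw₁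
    exact EReal.coe_ne_bot _ hw₁
  rw [ht] at hw₁
  norm_cast at hw₁
  have hwB : δ * ‖w‖ ^ 2 ≤ δ * B ^ 2 := by gcongr; exact hB w hwK
  have hz0 : 0 ≤ δ * ‖z₁‖ ^ 2 := by positivity
  have hwG : w ∈ G := by
    by_contra hwG
    have := hb w hwK hwG
    rw [ht, EReal.coe_le_coe_iff] at this
    linarith
  obtain ⟨r, hr, hrK, hcrit, p, hp⟩ := hloc w hwG (δ / 4) (by positivity)
  have hfin := hcrit (p - C (2 * δ * (starRingEnd ℂ) w) * (X - C w) +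
      C ((t - h w + δ / 4 * r ^ 2 - δ * r ^ 2 : ℝ) : ℂ)) ?_
  · have h1 := abs_le.1 (hp w (mem_closedBall_self hr.le))
    rw [ht, EReal.coe_le_coe_iff] at hfin
    simp only [eval_add, eval_sub, eval_mul, eval_C, eval_X, sub_self, mul_zero, sub_zero,
      Complex.add_re, Complex.ofReal_re] at hfin
    have : 0 < δ * r ^ 2 := by positivity
    linarith
  · intro z hz
    have hzc := sphere_subset_closedBall hz
    obtain hsz | ⟨σ, hsz⟩ := EReal.eq_bot_or_coe (htop z (hrK hzc))
    · simp [hsz]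
    have hmax := hw (hrK hzc)
    simp only [Set.mem_ofPred_eq, hsz, ht] at hmax
    norm_cast at hmax
    rw [hsz, EReal.coe_le_coe_iff]
    have h1 := abs_le.1 (hp z hzc)
    have h2 : ‖z‖ ^ 2 = ‖w‖ ^ 2 + 2 * ((starRingEnd ℂ) w * (z - w)).re + r ^ 2 := by
      rw [← mem_sphere_iff_norm.1 hz]
      simp only [Complex.sq_norm, Complex.normSq_apply, Complex.mul_re, Complex.conj_re,
        Complex.conj_im, Complex.sub_re, Complex.sub_im]
      ring
    have h3 : (2 * (δ : ℂ) * (starRingEnd ℂ) w * (z - w)).re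
        = 2 * δ * ((starRingEnd ℂ) w * (z - w)).re := by
      rw [mul_assoc (2 * (δ : ℂ)), show (2 * (δ : ℂ)) = ((2 * δ : ℝ) : ℂ) by push_cast; rfl,
        Complex.re_ofReal_mul]
    simp only [eval_add, eval_sub, eval_mul, eval_C, eval_X, Complex.add_re, Complex.sub_re,
      Complex.ofReal_re] at h3 ⊢
    rw [h3]
    rw [h2] at hmax
    nlinarith

open Polynomial in
/-- Subharmonicity is a local property. -/
lemma subharmonic_of_local {s : ℂ → EReal} (hs : UpperSemicontinuous s) (htop : ∀ z, s z < ⊤)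
    (hloc : ∀ w, ∃ r₀ > 0, ∀ r, 0 < r → r ≤ r₀ → ∀ q : ℂ[X],
      (∀ z ∈ sphere w r, s z ≤ ((q.eval z).re : EReal)) → s w ≤ ((q.eval w).re : EReal)) :
    SubharmonicOn' s Set.univ := by
  refine ⟨hs.upperSemicontinuousOn _, fun z _ => htop z, fun c r hr _ p hp => ?_⟩
  refine max_principle (G := ball c r) (h := fun z => (p.eval z).re) (isCompact_closedBall c r)
    (hs.upperSemicontinuousOn _) (fun z _ => htop z)
    (by have := p.continuous; fun_prop) (fun w hw δ hδ => ?_) (fun z hz hz' => ?_)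
  · obtain ⟨r₀, hr₀, H⟩ := hloc w
    have hd : 0 < r - dist w c := sub_pos.2 hw
    refine ⟨min r₀ (r - dist w c), lt_min hr₀ hd, ?_, H _ (lt_min hr₀ hd) (min_le_left _ _), p,
      fun z _ => by simp; positivity⟩
    exact closedBall_subset_closedBall' (by linarith [min_le_right r₀ (r - dist w c)])
  · exact hp z (by rw [mem_sphere]; exact le_antisymm hz (not_lt.1 hz'))

open Polynomial in
/-- One-variable Bernstein–Walsh inequality: a subharmonic function of logarithmic growth bounded by
`M` on the unit disc is bounded by `M + log ‖·‖` outside it. -/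
lemma bernstein_walsh {s : ℂ → EReal} (hs : SubharmonicOn' s Set.univ) {C' R₀ M : ℝ}
    (hgr : ∀ w, R₀ ≤ ‖w‖ → s w ≤ ((Real.log ‖w‖ + C' : ℝ) : EReal))
    (hM : ∀ w, ‖w‖ ≤ 1 → s w ≤ (M : EReal)) {w : ℂ} (hw : 1 ≤ ‖w‖) :
    s w ≤ ((M + Real.log ‖w‖ : ℝ) : EReal) := by
  have key : ∀ ε > 0, s w ≤ ((M + (1 + ε) * Real.log ‖w‖ : ℝ) : EReal) := by
    intro ε hε
    obtain ⟨ρ, hρ1, hρ2⟩ : ∃ ρ, (max (max R₀ ‖w‖) 1) ≤ ρ ∧ (C' - M) / ε ≤ Real.log ρ :=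
      ((eventually_ge_atTop _).and (Real.tendsto_log_atTop.eventually_ge_atTop _)).exists
    have hρR : R₀ ≤ ρ := ((le_max_left _ _).trans (le_max_left _ _)).trans hρ1
    have hρw : ‖w‖ ≤ ρ := ((le_max_right _ _).trans (le_max_left _ _)).trans hρ1
    rw [div_le_iff₀ hε] at hρ2
    have hne : ∀ z ∈ closedBall (0 : ℂ) ρ \ ball 0 1, ‖z‖ ≠ 0 := by
      intro z hz h0
      have := hz.2
      simp [h0] at this
    refine max_principle (K := closedBall 0 ρ \ ball 0 1) (G := ball 0 ρ \ closedBall 0 1)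
      (h := fun z => M + (1 + ε) * Real.log ‖z‖)
      ((isCompact_closedBall 0 ρ).diff isOpen_ball) (hs.1.mono (Set.subset_univ _))
      (fun z _ => hs.2.1 z trivial)
      (continuousOn_const.add (continuousOn_const.mul (continuous_norm.continuousOn.log hne)))
      (fun v hv δ hδ => ?_) (fun z hz hz' => ?_) w (by simp [hρw, hw])
    · have hv1 : ‖v‖ < ρ := by simpa using hv.1
      have hv2 : 1 < ‖v‖ := by simpa using hv.2
      have hv0 : v ≠ 0 := by rintro rfl; simp at hv2; linarith
      obtain ⟨r, hr0, hr⟩ : ∃ r > 0, r ≤ min (min (ρ - ‖v‖) (‖v‖ - 1)) (min (1 / 2) (δ / (1 + ε))) :=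
        ⟨_, lt_min (lt_min (by linarith) (by linarith)) (lt_min (by norm_num) (by positivity)),
          le_rfl⟩
      simp only [le_min_iff] at hr
      obtain ⟨⟨hr1, hr2⟩, hr3, hr4⟩ := hr
      rw [le_div_iff₀ (by positivity)] at hr4
      refine ⟨r, hr0, fun z hz => ?_, fun q hq => hs.2.2 v r hr0 (Set.subset_univ _) q hq v
        (mem_closedBall_self hr0.le), ?_⟩
      · rw [mem_closedBall_iff_norm] at hz
        have h1 := norm_sub_norm_le z v
        have h2 := norm_sub_norm_le v z
        rw [norm_sub_rev] at h2
        simp only [Set.mem_sdiff, mem_closedBall_zero_iff, mem_ball_zero_iff, not_lt]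
        constructor <;> linarith
      · let Y : ℂ[X] := C v⁻¹ * (X - C v)
        -- the second order Taylor polynomial of the logarithm at `v`, with error `O(r ^ 3)`
        refine ⟨C ((M + (1 + ε) * Real.log ‖v‖ : ℝ) : ℂ) +
          C ((1 + ε : ℝ) : ℂ) * (Y - C (1 / 2) * Y ^ 2), fun z hz => ?_⟩
        rw [mem_closedBall_iff_norm] at hz
        set y := v⁻¹ * (z - v) with hy
        have hyn : ‖y‖ ≤ r := by
          rw [hy, norm_mul, norm_inv]
          calc ‖v‖⁻¹ * ‖z - v‖ ≤ 1 * r := by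
                gcongr
                exact inv_le_one_of_one_le₀ hv2.le
            _ = r := one_mul r
        have hy1 : ‖y‖ ≤ 1 / 2 := hyn.trans hr3
        have hzv : z = v * (1 + y) := by rw [hy]; field_simp; ring
        have hne1 : 1 + y ≠ 0 := by
          intro h0
          have : ‖y‖ = 1 := by rw [show y = -1 by linear_combination h0]; simp
          linarith
        have hlog : Real.log ‖z‖ = Real.log ‖v‖ + (Complex.log (1 + y)).re := by
          rw [hzv, norm_mul, Real.log_mul (by simpa using hv0) (by simpa using hne1),
            Complex.log_re]
        have hT := Complex.norm_log_sub_logTaylor_le 2 (z := y) (by linarith)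
        have hT' : ‖Complex.log (1 + y) - (y - 1 / 2 * y ^ 2)‖ ≤ r ^ 3 := by
          have e : Complex.logTaylor (2 + 1) y = y - 1 / 2 * y ^ 2 := by
            simp [Complex.logTaylor, Finset.sum_range_succ]; ring
          rw [e] at hT
          refine hT.trans ?_
          have : (1 - ‖y‖)⁻¹ ≤ 2 := by
            rw [inv_le_comm₀ (by linarith) (by norm_num)]; linarith
          have hpos : 0 ≤ (1 - ‖y‖)⁻¹ := inv_nonneg.2 (by linarith)
          calc ‖y‖ ^ (2 + 1) * (1 - ‖y‖)⁻¹ / ((2 : ℕ) + 1) ≤ r ^ 3 * 2 / ((2 : ℕ) + 1) := by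
                gcongr
            _ ≤ r ^ 3 := by push_cast; have : 0 < r ^ 3 := by positivity
                            linarith
        have hre := (Complex.abs_re_le_norm _).trans hT'
        have hYz : Y.eval z = y := by simp [Y, hy]
        have e2 : M + (1 + ε) * Real.log ‖z‖ - ((C ((M + (1 + ε) * Real.log ‖v‖ : ℝ) : ℂ) +
            C ((1 + ε : ℝ) : ℂ) * (Y - C (1 / 2) * Y ^ 2)).eval z).re =
            (1 + ε) * (Complex.log (1 + y) - (y - 1 / 2 * y ^ 2)).re := by
          rw [hlog]
          simp only [eval_add, eval_mul, eval_sub, eval_pow, eval_C, hYz, Complex.add_re,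
            Complex.ofReal_re, Complex.re_ofReal_mul, Complex.sub_re]
          ring
        rw [e2, abs_mul, abs_of_pos (by linarith : 0 < 1 + ε)]
        calc (1 + ε) * _ ≤ (1 + ε) * r ^ 3 := by gcongr
          _ = (r * (1 + ε)) * r ^ 2 := by ring
          _ ≤ δ * r ^ 2 := by gcongr
    · simp only [Set.mem_sdiff, mem_closedBall_zero_iff, mem_ball_zero_iff, not_lt, not_and,
        not_le] at hz hz'
      by_cases hzρ : ‖z‖ < ρ
      · have : ‖z‖ = 1 := le_antisymm (by
          by_contra h0
          exact h0 (not_lt.1 fun h1 => absurd (hz' hzρ) (by simpa using h1))) hz.2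
        simpa [this] using hM z this.le
      · have hz3 : ‖z‖ = ρ := le_antisymm hz.1 (not_lt.1 hzρ)
        refine (hgr z (by rw [hz3]; exact hρR)).trans ?_
        rw [EReal.coe_le_coe_iff, hz3]
        linarith
  have hlw := Real.log_nonneg hw
  obtain h | ⟨t, h⟩ := EReal.eq_bot_or_coe (hs.2.1 w trivial)
  · simp [h]
  rw [h, EReal.coe_le_coe_iff]
  refine le_of_forall_pos_le_add fun η hη => ?_
  have := key (η / (Real.log ‖w‖ + 1)) (by positivity)
  rw [h, EReal.coe_le_coe_iff] at this
  have h3 : η / (Real.log ‖w‖ + 1) * Real.log ‖w‖ ≤ η := by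
    rw [div_mul_eq_mul_div, div_le_iff₀ (by positivity)]; nlinarith
  linarith

/-! ### The two-constants inequality and operations on subharmonic functions -/

lemma upperSemicontinuous_comp_circ {s : ℂ → EReal} (hs : SubharmonicOn' s Set.univ) (c : ℂ)
    (r : ℝ) : UpperSemicontinuous fun θ => s (circ c r θ) :=
  (upperSemicontinuousOn_univ_iff.1 hs.1).comp (continuous_circ c r)

open Polynomial MeasureTheory in
/-- Two-constants estimate: if `s ≤ C₀` on the circle and `s < δ` on a part of it of proportion at
least `η`, then `s w ≤ C₀ - κ * η * (C₀ - δ)`, where `κ` is a Harnack constant for the point `w`. -/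
lemma two_constants {s : ℂ → EReal} (hs : SubharmonicOn' s Set.univ) {c w : ℂ} {r κ : ℝ}
    (hr : 0 < r) (hw : w ∈ closedBall c r) (hκ0 : 0 ≤ κ)
    (hκ : ∀ p : ℂ[X], (∀ z ∈ sphere c r, 0 ≤ (p.eval z).re) →
      κ * (p.eval c).re ≤ (p.eval w).re)
    {C₀ δ η : ℝ} (hδ : δ ≤ C₀) (hC : ∀ z ∈ sphere c r, s z ≤ (C₀ : EReal))
    (hη : ENNReal.ofReal η ≤ AddCircle.haarAddCircle {θ : UnitAddCircle | s (circ c r θ) < δ}) :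
    s w ≤ ((C₀ - κ * η * (C₀ - δ) : ℝ) : EReal) := by
  have key : ∀ ε > 0, s w ≤ ((C₀ - κ * η * (C₀ - δ) + (2 + κ * (C₀ - δ)) * ε : ℝ) : EReal) := by
    intro ε hε
    have hopen : IsOpen {θ : UnitAddCircle | s (circ c r θ) < δ} :=
      (upperSemicontinuous_comp_circ hs c r).isOpen_preimage δ
    obtain ⟨F, hFs, hF, hFη⟩ : ∃ F ⊆ {θ : UnitAddCircle | s (circ c r θ) < δ}, IsCompact F ∧
        η - ε ≤ AddCircle.haarAddCircle.real F := by
      by_cases h0 : η - ε ≤ 0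
      · exact ⟨∅, Set.empty_subset _, isCompact_empty, by simpa using h0⟩
      · obtain ⟨F, h1, h2, h3⟩ := hopen.exists_lt_isCompact
          (((ENNReal.ofReal_lt_ofReal_iff (by linarith)).2 (by linarith : η - ε < η)).trans_le hη)
        refine ⟨F, h1, h2, ?_⟩
        rw [Measure.real, ← ENNReal.ofReal_le_iff_le_toReal (measure_ne_top _ _)]
        exact h3.le
    obtain ⟨g, hg0, hg1, hg⟩ := exists_continuous_zero_one_of_isClosed hopen.isClosed_compl
      hF.isClosed (Set.disjoint_compl_left_iff_subset.2 hFs)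
    let f : C(UnitAddCircle, ℝ) := ⟨fun θ => C₀ - (C₀ - δ) * g θ, by fun_prop⟩
    have hint : ∀ u : UnitAddCircle → ℝ, Continuous u → Integrable u AddCircle.haarAddCircle :=
      fun u hu => hu.integrable_of_hasCompactSupport (HasCompactSupport.of_compactSpace _)
    have hIg : η - ε ≤ ∫ θ, g θ ∂AddCircle.haarAddCircle := by
      refine hFη.trans ?_
      rw [← integral_indicator_one hF.measurableSet]
      refine integral_mono (Integrable.indicator (integrable_const _) hF.measurableSet)
        (hint _ g.continuous) fun θ => ?_
      by_cases hθ : θ ∈ F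
      · simp [hθ, hg1 hθ]
      · simpa [hθ] using (hg θ).1
    obtain ⟨q, hq⟩ := exists_re_polynomial_approx c hr f hε
    have hfC : ∀ θ, f θ ≤ C₀ := fun θ => by
      have := mul_nonneg (sub_nonneg.2 hδ) (hg θ).1
      simp only [f, ContinuousMap.coe_mk]; linarith
    have hsf : ∀ θ, s (circ c r θ) ≤ (f θ : EReal) := by
      intro θ
      by_cases hθ : s (circ c r θ) < δ
      · refine hθ.le.trans ?_
        rw [EReal.coe_le_coe_iff]
        have := mul_le_mul_of_nonneg_left (hg θ).2 (sub_nonneg.2 hδ)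
        simp only [f, ContinuousMap.coe_mk]; linarith
      · refine (hC _ (circ_mem_sphere c hr θ)).trans ?_
        have : g θ = 0 := hg0 hθ
        simp [f, this]
    have h1 : s w ≤ (((q + C (ε : ℂ)).eval w).re : EReal) := by
      refine hs.2.2 c r hr (Set.subset_univ _) _ (fun z hz => ?_) w hw
      obtain ⟨θ, rfl⟩ := exists_circ_eq hr hz
      refine (hsf θ).trans ?_
      rw [EReal.coe_le_coe_iff]
      have := abs_le.1 (hq θ)
      simp only [eval_add, eval_C, Complex.add_re, Complex.ofReal_re]; linarith
    have h2 := hκ (C ((C₀ + ε : ℝ) : ℂ) - q) (fun z hz => by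
      obtain ⟨θ, rfl⟩ := exists_circ_eq hr hz
      have := abs_le.1 (hq θ)
      have := hfC θ
      simp only [eval_sub, eval_C, Complex.sub_re, Complex.ofReal_re]; linarith)
    have h3 : (q.eval c).re ≤ C₀ - (C₀ - δ) * (η - ε) + ε := by
      rw [← integral_re_eval_circ c r q]
      have hi : ∫ θ, (f θ + ε) ∂AddCircle.haarAddCircle
          = C₀ - (C₀ - δ) * (∫ θ, g θ ∂AddCircle.haarAddCircle) + ε := by
        simp only [f, ContinuousMap.coe_mk]
        rw [integral_add (hint _ (by fun_prop)) (integrable_const _),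
          integral_sub (integrable_const _) (hint _ (by fun_prop)), integral_const_mul]
        simp
      calc _ ≤ ∫ θ, (f θ + ε) ∂AddCircle.haarAddCircle := by
            refine integral_mono (hint _ ?_) (hint _ (by fun_prop)) fun θ => ?_
            · exact Complex.continuous_re.comp (q.continuous.comp (continuous_circ c r))
            · have := abs_le.1 (hq θ)
              simp only; linarith
        _ ≤ _ := by
            rw [hi]
            have := mul_le_mul_of_nonneg_left hIg (sub_nonneg.2 hδ)
            linarith
    refine h1.trans ?_
    rw [EReal.coe_le_coe_iff]
    simp only [eval_add, eval_sub, eval_C, Complex.add_re, Complex.sub_re, Complex.ofReal_re]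
      at h2 ⊢
    have h4 : κ * ((C₀ - δ) * (η - ε)) ≤ κ * (C₀ + ε - (q.eval c).re) :=
      mul_le_mul_of_nonneg_left (by linarith) hκ0
    linarith
  obtain h | ⟨t, h⟩ := EReal.eq_bot_or_coe (hs.2.1 w trivial)
  · simp [h]
  rw [h, EReal.coe_le_coe_iff]
  have hpos : 0 < 2 + κ * (C₀ - δ) := by
    have := mul_nonneg hκ0 (sub_nonneg.2 hδ); linarith
  refine le_of_forall_pos_le_add fun ζ hζ => ?_
  have := key (ζ / (2 + κ * (C₀ - δ))) (by positivity)
  rwa [h, EReal.coe_le_coe_iff, mul_div_cancel₀ _ hpos.ne'] at this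

lemma SubharmonicOn'.scale {s : ℂ → EReal} (hs : SubharmonicOn' s Set.univ) {t : ℝ} (ht : 0 < t)
    (k : ℝ) : SubharmonicOn' (fun z => (t : EReal) * s z + (k : EReal)) Set.univ := by
  have hbot : (t : EReal) * ⊥ + (k : EReal) = ⊥ := by
    rw [EReal.coe_mul_bot_of_pos ht, EReal.bot_add]
  have hlt : ∀ z (y : ℝ), (t : EReal) * s z + (k : EReal) < y ↔ s z < (((y - k) / t : ℝ) : EReal) := by
    intro z y
    obtain h | ⟨σ, h⟩ := EReal.eq_bot_or_coe (hs.2.1 z trivial)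
    · simp [h, hbot]
    · rw [h]; norm_cast
      rw [lt_div_iff₀ ht, lt_sub_iff_add_lt, mul_comm]
  have hle : ∀ z (y : ℝ), (t : EReal) * s z + (k : EReal) ≤ y ↔ s z ≤ (((y - k) / t : ℝ) : EReal) := by
    intro z y
    obtain h | ⟨σ, h⟩ := EReal.eq_bot_or_coe (hs.2.1 z trivial)
    · simp [h, hbot]
    · rw [h]; norm_cast
      rw [le_div_iff₀ ht, le_sub_iff_add_le, mul_comm]
  have htop : ∀ z, (t : EReal) * s z + (k : EReal) < ⊤ := by
    intro z
    obtain h | ⟨σ, h⟩ := EReal.eq_bot_or_coe (hs.2.1 z trivial)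
    · simp [h, hbot]
    · rw [h]; norm_cast; exact EReal.coe_lt_top _
  refine ⟨?_, fun z _ => htop z, fun c r hr hcr p hp z hz => ?_⟩
  · intro x hx y hy
    obtain ⟨y', h1, h2⟩ := EReal.lt_iff_exists_real_btwn.1 hy
    filter_upwards [hs.1 x hx _ ((hlt x y').1 h1)] with z hz
    exact ((hlt z y').2 hz).trans h2
  · rw [hle]
    have e : ∀ z, (((Polynomial.C ((t⁻¹ : ℝ) : ℂ)) * (p - Polynomial.C (k : ℂ))).eval z).re =
        ((p.eval z).re - k) / t := by
      intro z
      simp only [Polynomial.eval_mul, Polynomial.eval_C, Polynomial.eval_sub,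
        Complex.re_ofReal_mul, Complex.sub_re, Complex.ofReal_re]
      field_simp
    rw [← e]
    refine hs.2.2 c r hr hcr _ (fun z hz => ?_) z hz
    rw [e, ← hle]
    exact hp z hz

/-- The sum of two subharmonic functions is subharmonic. If `s + t ≤ Re p` on a circle, a
continuous function can be inserted strictly between `s` and `Re p + ε - t`; approximating it by
the real part of a polynomial splits the criterion for `s + t` into those for `s` and `t`. -/
lemma SubharmonicOn'.add {s t : ℂ → EReal} (hs : SubharmonicOn' s Set.univ)
    (ht : SubharmonicOn' t Set.univ) : SubharmonicOn' (fun z => s z + t z) Set.univ := by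
  have htop : ∀ z, s z + t z < ⊤ := fun z =>
    EReal.add_lt_top (hs.2.1 z trivial).ne (ht.2.1 z trivial).ne
  refine ⟨UpperSemicontinuousOn.add' hs.1 ht.1 fun x hx =>
    EReal.continuousAt_add_of_lt_top (hs.2.1 x hx) (ht.2.1 x hx), fun z _ => htop z,
    fun c r hr _ p hp z hz => ?_⟩
  have key : ∀ ε > 0, s z + t z ≤ (((p.eval z).re + 3 * ε : ℝ) : EReal) := by
    intro ε hε
    let P : UnitAddCircle → ℝ := fun θ => (p.eval (circ c r θ)).re
    have hP : Continuous P :=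
      Complex.continuous_re.comp (p.continuous.comp (continuous_circ c r))
    have hS := upperSemicontinuous_comp_circ hs c r
    have hT := upperSemicontinuous_comp_circ ht c r
    obtain ⟨f, hf⟩ := exists_continuous_forall_mem_convex_of_local_const (X := UnitAddCircle)
      (t := fun θ => {y : ℝ | s (circ c r θ) < y ∧ t (circ c r θ) < ((P θ + ε - y : ℝ) : EReal)})
      (fun θ => by
        refine Set.OrdConnected.convex ⟨fun x hx y hy w hw => ⟨hx.1.trans_le ?_, hy.2.trans_le ?_⟩⟩
        · exact EReal.coe_le_coe_iff.2 hw.1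
        · exact EReal.coe_le_coe_iff.2 (by linarith [hw.2]))
      (fun θ => by
        have hθ : s (circ c r θ) + t (circ c r θ) ≤ _ := hp _ (circ_mem_sphere c hr θ)
        obtain ⟨y, hy1, hy2⟩ : ∃ y : ℝ, s (circ c r θ) < y ∧
            t (circ c r θ) < ((P θ + ε - y : ℝ) : EReal) := by
          obtain h1 | ⟨σ, h1⟩ := EReal.eq_bot_or_coe (hs.2.1 (circ c r θ) trivial)
          · obtain h2 | ⟨τ, h2⟩ := EReal.eq_bot_or_coe (ht.2.1 (circ c r θ) trivial)
            · exact ⟨0, by rw [h1]; exact EReal.bot_lt_coe _, by rw [h2]; exact EReal.bot_lt_coe _⟩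
            · refine ⟨P θ - τ, by rw [h1]; exact EReal.bot_lt_coe _, ?_⟩
              rw [h2, EReal.coe_lt_coe_iff]; linarith
          · refine ⟨σ + ε / 2, by rw [h1, EReal.coe_lt_coe_iff]; linarith, ?_⟩
            obtain h2 | ⟨τ, h2⟩ := EReal.eq_bot_or_coe (ht.2.1 (circ c r θ) trivial)
            · rw [h2]; exact EReal.bot_lt_coe _
            · rw [h2, EReal.coe_lt_coe_iff]
              rw [h1, h2] at hθ
              norm_cast at hθ
              simp only [P]; linarith
        obtain ⟨y', h1, h2⟩ := EReal.lt_iff_exists_real_btwn.1 hy2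
        refine ⟨y, ?_⟩
        have hcont : Continuous fun θ => P θ + ε - y := by fun_prop
        filter_upwards [hS θ _ hy1, hT θ _ h1,
          hcont.continuousAt.eventually (lt_mem_nhds (EReal.coe_lt_coe_iff.1 h2))] with ξ a b d
        exact ⟨a, b.trans (EReal.coe_lt_coe_iff.2 d)⟩)
    obtain ⟨q, hq⟩ := exists_re_polynomial_approx c hr f hε
    have h1 := hs.2.2 c r hr (Set.subset_univ _) (q + Polynomial.C (ε : ℂ)) (fun x hx => by
      obtain ⟨θ, rfl⟩ := exists_circ_eq hr hx
      refine (hf θ).1.le.trans ?_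
      rw [EReal.coe_le_coe_iff]
      have := abs_le.1 (hq θ)
      simp only [Polynomial.eval_add, Polynomial.eval_C, Complex.add_re, Complex.ofReal_re]
      linarith) z hz
    have h2 := ht.2.2 c r hr (Set.subset_univ _) (p - q + Polynomial.C ((2 * ε : ℝ) : ℂ))
      (fun x hx => by
        obtain ⟨θ, rfl⟩ := exists_circ_eq hr hx
        refine (hf θ).2.le.trans ?_
        rw [EReal.coe_le_coe_iff]
        have := abs_le.1 (hq θ)
        simp only [P, Polynomial.eval_add, Polynomial.eval_sub, Polynomial.eval_C, Complex.add_re,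
          Complex.sub_re, Complex.ofReal_re]
        linarith) z hz
    refine (add_le_add h1 h2).trans ?_
    rw [← EReal.coe_add, EReal.coe_le_coe_iff]
    simp only [Polynomial.eval_add, Polynomial.eval_sub, Polynomial.eval_C, Complex.add_re,
      Complex.sub_re, Complex.ofReal_re]
    linarith
  obtain h | ⟨y, h⟩ := EReal.eq_bot_or_coe (htop z)
  · simp [h]
  change s z + t z ≤ _
  rw [h, EReal.coe_le_coe_iff]
  refine le_of_forall_pos_le_add fun ζ hζ => ?_
  have := key (ζ / 3) (by positivity)
  rw [h, EReal.coe_le_coe_iff] at this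
  linarith

/-! ### Plurisubharmonic functions -/

variable {m : ℕ}

lemma continuous_line (a b : EuclideanSpace ℂ (Fin m)) : Continuous fun w : ℂ => a + w • b := by
  fun_prop

lemma PshOn.line {u : EuclideanSpace ℂ (Fin m) → EReal} (hu : PshOn u Set.univ)
    (a : EuclideanSpace ℂ (Fin m)) {b : EuclideanSpace ℂ (Fin m)} (hb : b ≠ 0) :
    SubharmonicOn' (fun w => u (a + w • b)) Set.univ := by
  simpa using hu.2.2 a b hb

lemma PshOn.usc {u : EuclideanSpace ℂ (Fin m) → EReal} (hu : PshOn u Set.univ) :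
    UpperSemicontinuous u := upperSemicontinuousOn_univ_iff.1 hu.1

lemma pshOn_univ {u : EuclideanSpace ℂ (Fin m) → EReal} (h1 : UpperSemicontinuous u)
    (h2 : ∀ z, u z < ⊤)
    (h3 : ∀ a b : EuclideanSpace ℂ (Fin m), b ≠ 0 →
      SubharmonicOn' (fun w => u (a + w • b)) Set.univ) : PshOn u Set.univ :=
  ⟨h1.upperSemicontinuousOn _, fun z _ => h2 z, fun a b hb => by simpa using h3 a b hb⟩

lemma PshOn.scale {u : EuclideanSpace ℂ (Fin m) → EReal} (hu : PshOn u Set.univ) {t : ℝ}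
    (ht : 0 < t) (k : ℝ) : PshOn (fun z => (t : EReal) * u z + (k : EReal)) Set.univ := by
  have hbot : (t : EReal) * ⊥ + (k : EReal) = ⊥ := by
    rw [EReal.coe_mul_bot_of_pos ht, EReal.bot_add]
  have hlt : ∀ z (y : ℝ), (t : EReal) * u z + (k : EReal) < y ↔ u z < (((y - k) / t : ℝ) : EReal) := by
    intro z y
    obtain h | ⟨σ, h⟩ := EReal.eq_bot_or_coe (hu.2.1 z trivial)
    · simp [h, hbot]
    · rw [h]; norm_cast
      rw [lt_div_iff₀ ht, lt_sub_iff_add_lt, mul_comm]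
  refine pshOn_univ (fun x y hy => ?_) (fun z => ?_) fun a b hb => (hu.line a hb).scale ht k
  · obtain ⟨y', h1, h2⟩ := EReal.lt_iff_exists_real_btwn.1 hy
    filter_upwards [hu.usc x _ ((hlt x y').1 h1)] with z hz
    exact ((hlt z y').2 hz).trans h2
  · obtain h | ⟨σ, h⟩ := EReal.eq_bot_or_coe (hu.2.1 z trivial)
    · simp [h, hbot]
    · rw [h]; norm_cast; exact EReal.coe_lt_top _

lemma PshOn.add {u v : EuclideanSpace ℂ (Fin m) → EReal} (hu : PshOn u Set.univ)
    (hv : PshOn v Set.univ) : PshOn (fun z => u z + v z) Set.univ :=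
  pshOn_univ (UpperSemicontinuous.add' hu.usc hv.usc fun x =>
      EReal.continuousAt_add_of_lt_top (hu.2.1 x trivial) (hv.2.1 x trivial))
    (fun z => EReal.add_lt_top (hu.2.1 z trivial).ne (hv.2.1 z trivial).ne)
    fun a _ hb => (hu.line a hb).add (hv.line a hb)

lemma continuous_logPlus (k : ℝ) : Continuous fun x : EuclideanSpace ℂ (Fin m) =>
    ((Real.log (max ‖x‖ 1) - k : ℝ) : EReal) := by
  refine continuous_coe_real_ereal.comp (Continuous.sub (Continuous.log (by fun_prop) fun x => ?_)
    continuous_const)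
  exact (zero_lt_one.trans_le (le_max_right _ _)).ne.symm

/-- `log⁺ ‖x‖ - k` is plurisubharmonic, by the maximum principle for vector-valued holomorphic
functions. -/
lemma pshOn_logPlus (k : ℝ) : PshOn (fun x : EuclideanSpace ℂ (Fin m) =>
    ((Real.log (max ‖x‖ 1) - k : ℝ) : EReal)) Set.univ := by
  refine pshOn_univ (continuous_logPlus k).upperSemicontinuous
    (fun z => EReal.coe_lt_top _) fun a b hb => ⟨?_, fun z _ => EReal.coe_lt_top _, ?_⟩
  · exact ((continuous_logPlus k).comp (continuous_line a b)).upperSemicontinuous.upperSemicontinuousOn _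
  · intro c r hr _ p hp z hz
    have e : ∀ w : ℂ, (Real.log (max ‖a + w • b‖ 1) - k ≤ (p.eval w).re) ↔
        ‖a + w • b‖ ≤ Real.exp ((p + Polynomial.C (k : ℂ)).eval w).re ∧
        ‖(1 : ℂ)‖ ≤ Real.exp ((p + Polynomial.C (k : ℂ)).eval w).re := by
      intro w
      rw [sub_le_iff_le_add, Real.log_le_iff_le_exp (zero_lt_one.trans_le (le_max_right _ _)),
        max_le_iff]
      simp
    simp only [EReal.coe_le_coe_iff, e] at hp ⊢
    exact ⟨norm_le_exp_re (by fun_prop) _ (fun w hw => (hp w hw).1) hr z hz,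
      norm_le_exp_re (f := fun _ => (1 : ℂ)) (by fun_prop) _ (fun w hw => (hp w hw).2) hr z hz⟩

lemma EReal.coe_mul_add_le {t k y : ℝ} {x : EReal} (ht : 0 < t) (h : x ≤ y) :
    (t : EReal) * x + (k : EReal) ≤ ((t * y + k : ℝ) : EReal) := by
  obtain hx | ⟨σ, hx⟩ := EReal.eq_bot_or_coe (h.trans_lt (EReal.coe_lt_top y))
  · rw [hx, EReal.coe_mul_bot_of_pos ht, EReal.bot_add]; exact bot_le
  · rw [hx, EReal.coe_le_coe_iff] at h
    rw [hx]; norm_cast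
    gcongr

open Classical in
/-- Gluing: if `f ≤ g` on the sphere of radius `ρ`, then `max f g` inside and `g` outside form a
plurisubharmonic function. -/
lemma pshOn_glue {f g : EuclideanSpace ℂ (Fin m) → EReal} (hf : PshOn f Set.univ)
    (hg : PshOn g Set.univ) {ρ : ℝ} (h : ∀ x, ‖x‖ = ρ → f x ≤ g x) :
    PshOn (fun x => if ‖x‖ ≤ ρ then max (f x) (g x) else g x) Set.univ := by
  have hgle : ∀ x, g x ≤ if ‖x‖ ≤ ρ then max (f x) (g x) else g x := by
    intro x; split_ifs <;> simp
  have htop : ∀ x, (if ‖x‖ ≤ ρ then max (f x) (g x) else g x) < ⊤ := by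
    intro x
    split_ifs
    · exact max_lt (hf.2.1 x trivial) (hg.2.1 x trivial)
    · exact hg.2.1 x trivial
  have husc : UpperSemicontinuous fun x => if ‖x‖ ≤ ρ then max (f x) (g x) else g x := by
    intro x y hy
    by_cases hx : ‖x‖ ≤ ρ
    · simp only [hx, if_true, max_lt_iff] at hy
      filter_upwards [hf.usc x y hy.1, hg.usc x y hy.2] with z h1 h2
      split_ifs
      · exact max_lt h1 h2
      · exact h2
    · simp only [hx, if_false] at hy
      filter_upwards [hg.usc x y hy, continuous_norm.continuousAt.eventually
        (lt_mem_nhds (not_le.1 hx))] with z h1 h2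
      rwa [if_neg (not_le.2 h2)]
  refine pshOn_univ husc htop fun a b hb => subharmonic_of_local
    (husc.comp (continuous_line a b)) (fun w => htop _) fun w => ?_
  have hfl := hf.line a hb
  have hgl := hg.line a hb
  by_cases hw : ‖a + w • b‖ < ρ
  · have hev : ∀ᶠ z in nhds w, ‖a + z • b‖ < ρ :=
      (continuous_line a b).norm.continuousAt.eventually (gt_mem_nhds hw)
    obtain ⟨r₀, hr₀, hb₀⟩ := Metric.nhds_basis_closedBall.eventually_iff.1 hev
    refine ⟨r₀, hr₀, fun r hr hrr q hq => ?_⟩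
    have hq' : ∀ z ∈ sphere w r, f (a + z • b) ≤ ((q.eval z).re : EReal) ∧
        g (a + z • b) ≤ ((q.eval z).re : EReal) := by
      intro z hz
      have := hq z hz
      rwa [if_pos (hb₀ (closedBall_subset_closedBall hrr (sphere_subset_closedBall hz))).le,
        max_le_iff] at this
    rw [if_pos hw.le]
    exact max_le
      (hfl.2.2 w r hr (Set.subset_univ _) q (fun z hz => (hq' z hz).1) w
        (mem_closedBall_self hr.le))
      (hgl.2.2 w r hr (Set.subset_univ _) q (fun z hz => (hq' z hz).2) w
        (mem_closedBall_self hr.le))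
  · refine ⟨1, one_pos, fun r hr _ q hq => ?_⟩
    have e : (if ‖a + w • b‖ ≤ ρ then max (f (a + w • b)) (g (a + w • b)) else g (a + w • b))
        = g (a + w • b) := by
      split_ifs with h'
      · exact max_eq_right (h _ (le_antisymm h' (not_lt.1 hw)))
      · rfl
    rw [e]
    exact hgl.2.2 w r hr (Set.subset_univ _) q (fun z hz => (hgle _).trans (hq z hz)) w
      (mem_closedBall_self hr.le)

/-! ### Competitors for the Green function -/

open Classical in
/-- A competitor `v'` for `V_{E_R}` close to a given `v`: inside a large ball it is the maximum of
`(1 - ε) * v + a * (u - M₀)` and `log⁺ ‖x‖ - b`, outside only the latter. The loss of `ε` in the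
growth of the first function makes room for `b` to be as large as wanted. -/
lemma exists_competitor {u v : EuclideanSpace ℂ (Fin m) → EReal} (hu : PshOn u Set.univ)
    (hv : MinGrowth v) (R : ℝ) {z : EuclideanSpace ℂ (Fin m)} (hz : u z ≠ ⊥) {ε : ℝ} (hε : 0 < ε)
    (hε1 : ε < 1) : ∃ v' : EuclideanSpace ℂ (Fin m) → EReal, MinGrowth v' ∧
      (∀ x, ‖x‖ ≤ R → (v x ≤ 0 ∨ u x = ⊥) → v' x ≤ 0) ∧
      ((1 - ε : ℝ) : EReal) * v z + ((-ε : ℝ) : EReal) ≤ v' z := by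
  obtain ⟨hvp, C, R₀, hC⟩ := hv
  -- the second condition on `ρ` says that `log⁺ R ≤ b`, so that `log⁺ ‖x‖ - b ≤ 0` for `‖x‖ ≤ R`
  obtain ⟨ρ, hρ1, hρ2⟩ : ∃ ρ, max (max R₀ R) (max ‖z‖ 1) ≤ ρ ∧
      ((1 - ε) * C + Real.log (max R 1)) / ε ≤ Real.log ρ :=
    ((eventually_ge_atTop _).and (Real.tendsto_log_atTop.eventually_ge_atTop _)).exists
  simp only [max_le_iff] at hρ1
  obtain ⟨⟨hρR₀, hρR⟩, hρz, hρ1⟩ := hρ1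
  rw [div_le_iff₀ hε] at hρ2
  set b := ε * Real.log ρ - (1 - ε) * C with hb
  obtain ⟨τ, hτ⟩ := (EReal.eq_bot_or_coe (hu.2.1 z trivial)).resolve_left hz
  obtain ⟨M₀, hM₀⟩ : ∃ M₀ : ℝ, ∀ x, ‖x‖ ≤ ρ → u x ≤ M₀ := by
    obtain ⟨x₀, -, hx₀⟩ := (hu.usc.upperSemicontinuousOn _).exists_isMaxOn
      (s := closedBall (0 : EuclideanSpace ℂ (Fin m)) ρ) ⟨z, by simpa using hρz⟩
      (isCompact_closedBall 0 ρ)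
    obtain ⟨M₀, h1, -⟩ := EReal.lt_iff_exists_real_btwn.1 (hu.2.1 x₀ trivial)
    exact ⟨M₀, fun x hx => (hx₀ (mem_closedBall_zero_iff.2 hx)).trans h1.le⟩
  have hτM : τ ≤ M₀ := by
    have := hM₀ z hρz
    rwa [hτ, EReal.coe_le_coe_iff] at this
  have hden : 0 < M₀ - τ + 1 := by linarith
  -- small enough that `a * (u - M₀)` costs at most `ε` at `z`
  set a := ε / (M₀ - τ + 1) with ha
  have ha0 : 0 < a := div_pos hε hden
  let f : EuclideanSpace ℂ (Fin m) → EReal := fun x =>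
    (((1 - ε : ℝ) : EReal) * v x + ((0 : ℝ) : EReal)) + ((a : EReal) * u x + ((-(a * M₀) : ℝ) : EReal))
  let g : EuclideanSpace ℂ (Fin m) → EReal := fun x => ((Real.log (max ‖x‖ 1) - b : ℝ) : EReal)
  have hf : PshOn f Set.univ := (hvp.scale (by linarith) 0).add (hu.scale ha0 _)
  have hg : PshOn g Set.univ := pshOn_logPlus b
  have hfle : ∀ x (y : ℝ), ‖x‖ ≤ ρ → v x ≤ y → f x ≤ (((1 - ε) * y : ℝ) : EReal) := by
    intro x y hx hy
    refine (add_le_add (EReal.coe_mul_add_le (by linarith) hy)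
      (EReal.coe_mul_add_le ha0 (hM₀ x hx))).trans ?_
    norm_cast
    linarith
  refine ⟨fun x => if ‖x‖ ≤ ρ then max (f x) (g x) else g x, ⟨pshOn_glue hf hg fun x hx => ?_,
    -b, ρ + 1, fun x hx => ?_⟩, fun x hx h0 => ?_, ?_⟩
  · refine (hfle x _ hx.le (hC x (hx ▸ hρR₀))).trans ?_
    simp only [g, hx, max_eq_left hρ1, EReal.coe_le_coe_iff]
    linarith
  · beta_reduce
    rw [if_neg (by linarith)]
    simp only [g, EReal.coe_le_coe_iff]
    rw [max_eq_left (by linarith)]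
    linarith
  · beta_reduce
    rw [if_pos (hx.trans hρR)]
    refine max_le ?_ ?_
    · obtain h0 | h0 := h0
      · simpa using hfle x 0 (hx.trans hρR) (by simpa using h0)
      · simp only [f, h0, EReal.coe_mul_bot_of_pos ha0, EReal.bot_add, EReal.add_bot]
        exact bot_le
    · have : Real.log (max ‖x‖ 1) ≤ Real.log (max R 1) :=
        Real.log_le_log (zero_lt_one.trans_le (le_max_right _ _)) (max_le_max_right 1 hx)
      simp only [g]
      exact_mod_cast (by linarith : Real.log (max ‖x‖ 1) - b ≤ 0)
  · beta_reduce
    rw [if_pos hρz]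
    refine le_trans ?_ (le_max_left _ _)
    have h1 : a * (M₀ - τ) ≤ ε := by
      rw [ha, div_mul_eq_mul_div, div_le_iff₀ hden]
      nlinarith
    simp only [f, hτ, EReal.coe_zero, add_zero]
    gcongr
    norm_cast
    linarith

lemma greenFn_mono {E F : Set (EuclideanSpace ℂ (Fin m))} (h : E ⊆ F)
    (z : EuclideanSpace ℂ (Fin m)) : greenFn F z ≤ greenFn E z :=
  sSup_le_sSup (Set.image_mono fun _ hu => ⟨hu.1, fun x hx => hu.2 x (h hx)⟩)

lemma greenFn_nonneg (E : Set (EuclideanSpace ℂ (Fin m))) (z : EuclideanSpace ℂ (Fin m)) :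
    0 ≤ greenFn E z := by
  refine le_sSup ⟨fun _ => 0, ⟨⟨pshOn_univ upperSemicontinuous_const
    (fun _ => EReal.zero_lt_top) fun a b _ => ⟨upperSemicontinuousOn_const,
      fun _ _ => EReal.zero_lt_top, fun c r hr _ p hp w hw => ?_⟩, 0, 1, fun x hx => ?_⟩,
    fun _ _ => le_rfl⟩, rfl⟩
  · beta_reduce at hp ⊢
    exact_mod_cast re_nonneg_of_sphere hr p (fun z hz => by exact_mod_cast hp z hz) w hw
  · beta_reduce
    have := Real.log_nonneg hx
    exact_mod_cast (by linarith : 0 ≤ Real.log ‖x‖ + 0)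

/-- Off the set `{u = -∞}`, removing a subset of `{u = -∞}` from a bounded set does not affect the
Green function. -/
lemma le_greenFn {E A : Set (EuclideanSpace ℂ (Fin m))} {u v : EuclideanSpace ℂ (Fin m) → EReal}
    (hu : PshOn u Set.univ) (hA : ∀ x ∈ A, u x = ⊥) (hv : MinGrowth v) {R : ℝ}
    (hvE : ∀ x ∈ (E \ A) ∩ closedBall 0 R, v x ≤ 0) {z : EuclideanSpace ℂ (Fin m)}
    (hz : u z ≠ ⊥) : v z ≤ greenFn (E ∩ closedBall 0 R) z := by
  obtain h | ⟨t, ht⟩ := EReal.eq_bot_or_coe (hv.1.2.1 z trivial)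
  · simp [h]
  by_contra! hlt
  rw [ht] at hlt
  obtain ⟨y, hy1, hy2⟩ := EReal.lt_iff_exists_real_btwn.1 hlt
  rw [EReal.coe_lt_coe_iff] at hy2
  have hlim : Tendsto (fun ε : ℝ => (1 - ε) * t + -ε) (nhdsWithin 0 (Set.Ioi 0)) (nhds t) := by
    refine Tendsto.mono_left ?_ nhdsWithin_le_nhds
    have : Continuous fun ε : ℝ => (1 - ε) * t + -ε := by fun_prop
    simpa using this.tendsto 0
  obtain ⟨ε, hε, hε0, hε1⟩ := ((hlim.eventually (lt_mem_nhds hy2)).and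
    (Ioo_mem_nhdsGT (zero_lt_one' ℝ))).exists
  obtain ⟨v', h1, h2, h3⟩ := exists_competitor hu hv R hz hε0 hε1
  have h4 : v' z ≤ greenFn (E ∩ closedBall 0 R) z := by
    refine le_sSup ⟨v', ⟨h1, fun x hx => h2 x (mem_closedBall_zero_iff.1 hx.2) ?_⟩, rfl⟩
    by_cases hxA : x ∈ A
    · exact Or.inr (hA x hxA)
    · exact Or.inl (hvE x ⟨⟨hx.1, hxA⟩, hx.2⟩)
  rw [ht] at h3
  have h5 := (h3.trans h4).trans hy1.le
  norm_cast at h5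
  linarith

/-! ### Restriction to a complex line -/

lemma exists_line_growth {v : EuclideanSpace ℂ (Fin m) → EReal} {C R₀ : ℝ}
    (hC : ∀ z, R₀ ≤ ‖z‖ → v z ≤ ((Real.log ‖z‖ + C : ℝ) : EReal))
    (a : EuclideanSpace ℂ (Fin m)) {b : EuclideanSpace ℂ (Fin m)} (hb : b ≠ 0) :
    ∃ C' R' : ℝ, ∀ w : ℂ, R' ≤ ‖w‖ → v (a + w • b) ≤ ((Real.log ‖w‖ + C' : ℝ) : EReal) := by
  have hb0 : 0 < ‖b‖ := norm_pos_iff.2 hb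
  refine ⟨Real.log (‖a‖ + ‖b‖) + C, max 1 ((max R₀ 1 + ‖a‖) / ‖b‖), fun w hw => ?_⟩
  rw [max_le_iff, div_le_iff₀ hb0] at hw
  have h1 : ‖w‖ * ‖b‖ - ‖a‖ ≤ ‖a + w • b‖ := by
    have := norm_sub_norm_le (w • b) (-a)
    rw [norm_smul, norm_neg, sub_neg_eq_add, add_comm _ a] at this
    exact this
  have h2 : ‖a + w • b‖ ≤ ‖w‖ * (‖a‖ + ‖b‖) := by
    have := norm_add_le a (w • b)
    rw [norm_smul] at this
    nlinarith [norm_nonneg a]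
  have h3 := le_max_left R₀ 1
  have h4 := le_max_right R₀ 1
  refine (hC _ (by linarith)).trans ?_
  rw [EReal.coe_le_coe_iff, ← add_assoc, ← Real.log_mul (by linarith) (by positivity)]
  have := Real.log_le_log (by linarith) h2
  linarith

/-- A subharmonic function of logarithmic growth that is below `δ` on most of the circle of radius
`4` is not much larger than `δ` at the centre. Two-constants at a maximum point in the unit disc,
together with the Bernstein–Walsh inequality, bounds the function on the whole circle. -/
lemma le_of_small_on_circle {s : ℂ → EReal} (hs : SubharmonicOn' s Set.univ) {C' R' : ℝ}
    (hgr : ∀ w, R' ≤ ‖w‖ → s w ≤ ((Real.log ‖w‖ + C' : ℝ) : EReal)) {δ η : ℝ} (hη : η ≤ 1 / 2)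
    (hmeas : ENNReal.ofReal (1 - η) ≤
      AddCircle.haarAddCircle {θ : UnitAddCircle | s (circ 0 4 θ) < δ}) :
    s 0 ≤ ((δ + 6 * η * Real.log 4 : ℝ) : EReal) := by
  have hlog : 0 < Real.log 4 := Real.log_pos (by norm_num)
  have hsphere : ∀ {M : ℝ}, (∀ w, ‖w‖ ≤ 1 → s w ≤ (M : EReal)) →
      ∀ w ∈ sphere (0 : ℂ) 4, s w ≤ ((M + Real.log 4 : ℝ) : EReal) := by
    intro M hM w hw
    have hw4 : ‖w‖ = 4 := mem_sphere_zero_iff_norm.1 hw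
    have := bernstein_walsh hs hgr hM (w := w) (by rw [hw4]; norm_num)
    rwa [hw4] at this
  have hdisc : ∀ w, ‖w‖ ≤ 1 → s w ≤ ((δ + 5 * Real.log 4 : ℝ) : EReal) := by
    obtain ⟨w₀, hw₀, hmax⟩ := (hs.1.mono (Set.subset_univ _)).exists_isMaxOn
      (s := closedBall (0 : ℂ) 1) ⟨0, by simp⟩ (isCompact_closedBall 0 1)
    rw [mem_closedBall_zero_iff] at hw₀
    intro w hw
    refine le_trans (hmax (mem_closedBall_zero_iff.2 hw)) ?_
    obtain h | ⟨M, h⟩ := EReal.eq_bot_or_coe (hs.2.1 w₀ trivial)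
    · rw [h]; exact bot_le
    by_contra! hlt
    rw [h, EReal.coe_lt_coe_iff] at hlt
    have := two_constants hs (c := 0) (w := w₀) (r := 4) (κ := 1 / 3) (by norm_num)
      (mem_closedBall_zero_iff.2 (by linarith)) (by norm_num)
      (fun p hp => harnack (by norm_num) p hp (by rw [sub_zero]; linarith))
      (C₀ := M + Real.log 4) (δ := δ) (η := 1 / 2) (by linarith)
      (hsphere fun z hz => h ▸ hmax (mem_closedBall_zero_iff.2 hz))
      ((ENNReal.ofReal_le_ofReal (by linarith)).trans hmeas)
    rw [h, EReal.coe_le_coe_iff] at this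
    linarith
  refine (two_constants hs (c := 0) (w := 0) (r := 4) (κ := 1) (by norm_num)
    (mem_closedBall_self (by norm_num)) (by norm_num) (fun p _ => by rw [one_mul])
    (by linarith) (hsphere hdisc) hmeas).trans ?_
  rw [EReal.coe_le_coe_iff]
  linarith

/-- A subharmonic function that is finite somewhere in the unit disc is finite almost everywhere on
the circle of radius `4`. -/
lemma measure_circ_eq_bot {s : ℂ → EReal} (hs : SubharmonicOn' s Set.univ) {w : ℂ} (hw : ‖w‖ ≤ 1)
    (hsw : s w ≠ ⊥) :
    AddCircle.haarAddCircle {θ : UnitAddCircle | s (circ 0 4 θ) = ⊥} = 0 := by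
  by_contra hne
  set μ := AddCircle.haarAddCircle {θ : UnitAddCircle | s (circ 0 4 θ) = ⊥} with hμ
  have hfin : μ ≠ ⊤ := MeasureTheory.measure_ne_top _ _
  have hη : 0 < μ.toReal := ENNReal.toReal_pos hne hfin
  obtain ⟨τ, hτ⟩ := (EReal.eq_bot_or_coe (hs.2.1 w trivial)).resolve_left hsw
  obtain ⟨C₀, hC₀⟩ : ∃ C₀ : ℝ, ∀ z ∈ sphere (0 : ℂ) 4, s z ≤ C₀ := by
    obtain ⟨x₀, -, hx₀⟩ := (hs.1.mono (Set.subset_univ _)).exists_isMaxOn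
      (s := sphere (0 : ℂ) 4) ⟨4, by simp⟩ (isCompact_sphere 0 4)
    obtain ⟨C₀, h1, -⟩ := EReal.lt_iff_exists_real_btwn.1 (hs.2.1 x₀ trivial)
    exact ⟨C₀, fun x hx => (hx₀ hx).trans h1.le⟩
  -- `s` lies below every level `C₀ - k` on the set; this `k` makes the two-constants bound too small
  set k := 3 / μ.toReal * (|C₀ - τ| + 1) with hk
  have hk0 : 0 < k := by positivity
  have := two_constants hs (c := 0) (w := w) (r := 4) (κ := 1 / 3) (by norm_num)
    (mem_closedBall_zero_iff.2 (by linarith)) (by norm_num)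
    (fun p hp => harnack (by norm_num) p hp (by rw [sub_zero]; linarith))
    (C₀ := C₀) (δ := C₀ - k) (η := μ.toReal) (by linarith) hC₀ (by
      rw [ENNReal.ofReal_toReal hfin]
      refine MeasureTheory.measure_mono fun θ hθ => ?_
      rw [Set.mem_ofPred_eq] at hθ ⊢
      rw [hθ]
      exact EReal.bot_lt_coe _)
  rw [hτ, EReal.coe_le_coe_iff] at this
  have e : 1 / 3 * μ.toReal * (C₀ - (C₀ - k)) = |C₀ - τ| + 1 := by
    rw [hk]; field_simp; ring
  rw [e] at this
  linarith [le_abs_self (C₀ - τ)]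

/-! ### Non-thinness -/

/-- **Lemma 1 a).** If `E ⊆ ℂ^m` is non-thin at `∞` and `A` is pluripolar, then
`E \ A` is non-thin at `∞`. -/
theorem nonthinAtInfty_diff_pluripolar {m : ℕ}
    (E A : Set (EuclideanSpace ℂ (Fin m)))
    (hE : NonthinAtInfty E) (hA : Pluripolar A) :
    NonthinAtInfty (E \ A) := by
  obtain ⟨u, hu, ⟨z₁, hz₁⟩, hA⟩ := hA
  intro z₀
  by_cases hz₀ : u z₀ = ⊥
  swap
  · exact tendsto_of_tendsto_of_tendsto_of_le_of_le tendsto_const_nhds (hE z₀)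
      (fun R => greenFn_nonneg _ _)
      fun R => sSup_le (by rintro _ ⟨v, ⟨hv, hv0⟩, rfl⟩; exact le_greenFn hu hA hv hv0 hz₀)
  set b := z₁ - z₀ with hb
  have hb0 : b ≠ 0 := by
    rw [hb, sub_ne_zero]; rintro rfl; exact hz₁ hz₀
  have hnull := measure_circ_eq_bot (hu.line z₀ hb0) (w := 1) (by simp) (by simpa [hb] using hz₁)
  have key : ∀ δ : ℝ, 0 < δ → ∀ η : ℝ, 0 < η → η ≤ 1 / 2 → ∀ᶠ R : ℝ in atTop,
      greenFn ((E \ A) ∩ closedBall 0 R) z₀ ≤ ((δ + 6 * η * Real.log 4 : ℝ) : EReal) := by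
    intro δ hδ η hη0 hη
    let T : ℕ → Set UnitAddCircle := fun k =>
      {θ | greenFn (E ∩ closedBall 0 (k : ℝ)) (z₀ + circ 0 4 θ • b) < (δ : EReal)}
    have hTmono : Monotone T := fun k l hkl θ hθ =>
      (greenFn_mono (Set.inter_subset_inter_right _
        (closedBall_subset_closedBall (Nat.cast_le.2 hkl))) _).trans_lt hθ
    have hTU : ⋃ k, T k = Set.univ := by
      refine Set.eq_univ_of_forall fun θ => Set.mem_iUnion.2 ?_
      exact (((hE (z₀ + circ 0 4 θ • b)).comp tendsto_natCast_atTop_atTop).eventually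
        (gt_mem_nhds (by exact_mod_cast hδ : (0 : EReal) < δ))).exists
    have hsup : ENNReal.ofReal (1 - η) < ⨆ k, AddCircle.haarAddCircle (T k) := by
      rw [← hTmono.measure_iUnion, hTU, MeasureTheory.measure_univ, ← ENNReal.ofReal_one]
      exact (ENNReal.ofReal_lt_ofReal_iff one_pos).2 (by linarith)
    obtain ⟨k, hk⟩ := lt_iSup_iff.1 hsup
    filter_upwards [eventually_ge_atTop (k : ℝ)] with R hR
    refine sSup_le ?_
    rintro _ ⟨v, ⟨hv, hv0⟩, rfl⟩
    obtain ⟨C, R₀, hC⟩ := hv.2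
    obtain ⟨C', R', hgr⟩ := exists_line_growth hC z₀ hb0
    have := le_of_small_on_circle (hv.1.line z₀ hb0) hgr (δ := δ) hη (hk.le.trans ?_)
    · simpa using this
    · rw [← MeasureTheory.measure_sdiff_null hnull]
      refine MeasureTheory.measure_mono fun θ hθ => ?_
      exact ((le_greenFn hu hA hv hv0 hθ.2).trans (greenFn_mono
        (Set.inter_subset_inter_right _ (closedBall_subset_closedBall hR)) _)).trans_lt hθ.1
  refine tendsto_order.2 ⟨fun a ha => Eventually.of_forall fun R =>
    ha.trans_le (greenFn_nonneg _ _), fun a ha => ?_⟩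
  obtain ⟨y, hy0, hy⟩ := EReal.lt_iff_exists_real_btwn.1 ha
  have hy0 : 0 < y := by exact_mod_cast hy0
  have hlog : 0 < Real.log 4 := Real.log_pos (by norm_num)
  filter_upwards [key (y / 2) (by positivity) (min (1 / 2) (y / (12 * Real.log 4)))
    (lt_min (by norm_num) (by positivity)) (min_le_left _ _)] with R hR
  refine (hR.trans ?_).trans_lt hy
  rw [EReal.coe_le_coe_iff]
  have := min_le_right (1 / 2) (y / (12 * Real.log 4))
  rw [le_div_iff₀ (by positivity)] at this
  linarith

end
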